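/- (Key separation lemma.) There exists a universal constant c̃ > 0 such that the following holds for all integers p ≥ r ≥ 1 and every μ > 0. Let P = UΣVᵀ and Q = LΛRᵀ, where U, V, L, R ∈ O_{p,r} are all μ-incoherent, Σ = diag(σ₁, …, σ_r) with σ₁ ≥ σ₂ ≥ … ≥ σ_r ≥ 0, and Λ = diag(λ₁, …, λ_r) with λ₁ ≥ λ₂ ≥ … ≥ λ_r ≥ 0. Then, with Δ = P − Q, one has ‖Δ‖_max² ≤ (c̃ μ r⁴ / p)·‖Δ‖_F². In particular, if Δ ≠ 0 then ‖Δ‖_max²/‖Δ‖_F² ≤ c̃ μ r⁴ / p. -/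

import Mathlib

open Matrix
open scoped BigOperators RealInnerProductSpace

noncomputable def frobNorm {m n : Type*} [Fintype m] [Fintype n] (M : Matrix m n ℝ) : ℝ :=
  Real.sqrt (∑ i, ∑ j, (M i j) ^ 2)

noncomputable def frobInner {m n : Type*} [Fintype m] [Fintype n] (A B : Matrix m n ℝ) : ℝ :=
  ∑ i, ∑ j, A i j * B i j

noncomputable def maxNorm {m n : Type*} [Fintype m] [Fintype n] (M : Matrix m n ℝ) : ℝ :=
  ⨆ i, ⨆ j, |M i j|

noncomputable def l0Norm {m n : Type*} (M : Matrix m n ℝ) : ℕ :=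
  Set.ncard {ij : m × n | M ij.1 ij.2 ≠ 0}

noncomputable def specNorm {p q : ℕ} (M : Matrix (Fin p) (Fin q) ℝ) : ℝ :=
  ‖LinearMap.toContinuousLinearMap (Matrix.toEuclideanLin M)‖

def Incoherent {p r : ℕ} (μ : ℝ) (U : Matrix (Fin p) (Fin r) ℝ) : Prop :=
  ∀ i, Real.sqrt (∑ j, (U i j) ^ 2) ≤ Real.sqrt (μ * r / p)

def SepProp (p r : ℕ) (μ c : ℝ) : Prop :=
  ∀ (U V L R : Matrix (Fin p) (Fin r) ℝ) (S Lam : Matrix (Fin r) (Fin r) ℝ),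
    Uᵀ * U = 1 → Vᵀ * V = 1 → Lᵀ * L = 1 → Rᵀ * R = 1 →
    Incoherent μ U → Incoherent μ V → Incoherent μ L → Incoherent μ R →
    S.IsDiag → (∀ i, 0 ≤ S i i) → Lam.IsDiag → (∀ i, 0 ≤ Lam i i) →
    maxNorm (U * S * Vᵀ - L * Lam * Rᵀ) ^ 2 ≤
      (c * μ * (r : ℝ) ^ 4 / p) * frobNorm (U * S * Vᵀ - L * Lam * Rᵀ) ^ 2

noncomputable def l1Norm {m n : Type*} [Fintype m] [Fintype n] (M : Matrix m n ℝ) : ℝ :=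
  ∑ i, ∑ j, |M i j|

noncomputable def nuclearNorm {p q : ℕ} (M : Matrix (Fin p) (Fin q) ℝ) : ℝ :=
  sSup {x : ℝ | ∃ X : Matrix (Fin p) (Fin q) ℝ, specNorm X ≤ 1 ∧ x = frobInner M X}

noncomputable def Phi {p : ℕ} (lam : ℝ) (Δ : Matrix (Fin p) (Fin p) ℝ) : ℝ :=
  sInf {x : ℝ | ∃ L S : Matrix (Fin p) (Fin p) ℝ, L + S = Δ ∧ x = nuclearNorm L + lam * l1Norm S}

/-- Pythagoras for the orthogonal projection `L Lᵀ`. -/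
theorem dotProduct_sub_proj {m n : Type*} [Fintype m] [Fintype n] [DecidableEq n]
    {L : Matrix m n ℝ} (hL : Lᵀ * L = 1) (x : m → ℝ) :
    (x - L *ᵥ (Lᵀ *ᵥ x)) ⬝ᵥ (x - L *ᵥ (Lᵀ *ᵥ x)) =
      x ⬝ᵥ x - (Lᵀ *ᵥ x) ⬝ᵥ (Lᵀ *ᵥ x) := by
  have hx : x ⬝ᵥ (L *ᵥ (Lᵀ *ᵥ x)) = (Lᵀ *ᵥ x) ⬝ᵥ (Lᵀ *ᵥ x) := by
    rw [dotProduct_mulVec, ← mulVec_transpose]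
  have hP : (L *ᵥ (Lᵀ *ᵥ x)) ⬝ᵥ (L *ᵥ (Lᵀ *ᵥ x)) = (Lᵀ *ᵥ x) ⬝ᵥ (Lᵀ *ᵥ x) := by
    rw [dotProduct_mulVec, ← mulVec_transpose, mulVec_mulVec, hL, one_mulVec]
  rw [dotProduct_sub, sub_dotProduct, sub_dotProduct, dotProduct_comm (L *ᵥ _) x, hx, hP]
  ring

theorem dotProduct_self_nonneg_real {m : Type*} [Fintype m] (x : m → ℝ) : 0 ≤ x ⬝ᵥ x :=
  Finset.sum_nonneg fun i _ => mul_self_nonneg (x i)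

/-- Bessel's inequality for the orthonormal columns of `L`. -/
theorem dotProduct_transpose_mulVec_le {m n : Type*} [Fintype m] [Fintype n] [DecidableEq n]
    {L : Matrix m n ℝ} (hL : Lᵀ * L = 1) (x : m → ℝ) :
    (Lᵀ *ᵥ x) ⬝ᵥ (Lᵀ *ᵥ x) ≤ x ⬝ᵥ x := by
  linarith [dotProduct_sub_proj hL x, dotProduct_self_nonneg_real (x - L *ᵥ (Lᵀ *ᵥ x))]

/-- Projecting away from the columns of `L` is a contraction. -/
theorem dotProduct_sub_proj_le {m n : Type*} [Fintype m] [Fintype n] [DecidableEq n]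
    {L : Matrix m n ℝ} (hL : Lᵀ * L = 1) (x : m → ℝ) :
    (x - L *ᵥ (Lᵀ *ᵥ x)) ⬝ᵥ (x - L *ᵥ (Lᵀ *ᵥ x)) ≤ x ⬝ᵥ x := by
  linarith [dotProduct_sub_proj hL x, dotProduct_self_nonneg_real (Lᵀ *ᵥ x)]

/-- An entry of `L Lᵀ x` is controlled by the corresponding row of `L` and by `x`. -/
theorem proj_apply_sq_le {m n : Type*} [Fintype m] [Fintype n] [DecidableEq n]
    {L : Matrix m n ℝ} (hL : Lᵀ * L = 1) (x : m → ℝ) (i : m) :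
    ((L *ᵥ (Lᵀ *ᵥ x)) i) ^ 2 ≤ (∑ k, L i k ^ 2) * (x ⬝ᵥ x) := by
  calc ((L *ᵥ (Lᵀ *ᵥ x)) i) ^ 2
      ≤ (∑ k, L i k ^ 2) * ∑ k, ((Lᵀ *ᵥ x) k) ^ 2 := Finset.sum_mul_sq_le_sq_mul_sq _ _ _
    _ ≤ (∑ k, L i k ^ 2) * (x ⬝ᵥ x) := by
      refine mul_le_mul_of_nonneg_left ?_ (Finset.sum_nonneg fun k _ => sq_nonneg _)
      simpa only [dotProduct, ← sq] using dotProduct_transpose_mulVec_le hL x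

theorem frobNorm_sq {m n : Type*} [Fintype m] [Fintype n] (M : Matrix m n ℝ) :
    frobNorm M ^ 2 = ∑ i, ∑ j, M i j ^ 2 :=
  Real.sq_sqrt (Finset.sum_nonneg fun _ _ => Finset.sum_nonneg fun _ _ => sq_nonneg _)

theorem row_dotProduct_le_frobNorm_sq {m n : Type*} [Fintype m] [Fintype n]
    (M : Matrix m n ℝ) (i : m) : M i ⬝ᵥ M i ≤ frobNorm M ^ 2 := by
  rw [frobNorm_sq]
  simp only [dotProduct, ← sq]
  exact Finset.single_le_sum (f := fun i => ∑ j, M i j ^ 2)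
    (fun _ _ => Finset.sum_nonneg fun _ _ => sq_nonneg _) (Finset.mem_univ i)

theorem frobNorm_transpose {m n : Type*} [Fintype m] [Fintype n] (M : Matrix m n ℝ) :
    frobNorm Mᵀ = frobNorm M := by
  simp only [frobNorm, transpose_apply]
  rw [Finset.sum_comm]

theorem frobNorm_sq_sub_proj_le {m n q : Type*} [Fintype m] [Fintype n] [DecidableEq n]
    [Fintype q] {L : Matrix m n ℝ} (hL : Lᵀ * L = 1) (M : Matrix m q ℝ) :
    frobNorm (M - L * (Lᵀ * M)) ^ 2 ≤ frobNorm M ^ 2 := by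
  rw [← frobNorm_transpose, ← frobNorm_transpose M, frobNorm_sq, frobNorm_sq]
  refine Finset.sum_le_sum fun j _ => ?_
  have h := dotProduct_sub_proj_le hL (M.col j)
  simp only [dotProduct, ← sq] at h
  exact h

theorem Incoherent.sum_sq_le {p r : ℕ} {μ : ℝ} (hμ : 0 ≤ μ) {U : Matrix (Fin p) (Fin r) ℝ}
    (hU : Incoherent μ U) (i : Fin p) : ∑ j, U i j ^ 2 ≤ μ * r / p :=
  (Real.sqrt_le_sqrt_iff (by positivity)).1 (hU i)

/-- Each entry of a difference of two low-rank matrices is controlled by the incoherence of the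
left factor of one of them and of the right factor of the other. -/
theorem entry_sq_le_of_incoherent {p r : ℕ} {μ : ℝ} (hμ : 0 ≤ μ)
    {V L : Matrix (Fin p) (Fin r) ℝ} (hV : Vᵀ * V = 1) (hL : Lᵀ * L = 1)
    (hVμ : Incoherent μ V) (hLμ : Incoherent μ L)
    (A : Matrix (Fin p) (Fin r) ℝ) (B : Matrix (Fin r) (Fin p) ℝ) (i j : Fin p) :
    (A * Vᵀ - L * B) i j ^ 2 ≤ 4 * (μ * r / p) * frobNorm (A * Vᵀ - L * B) ^ 2 := by
  set Δ := A * Vᵀ - L * B with hΔ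
  set N := Δ - L * (Lᵀ * Δ) with hN
  have hNV : N = N * V * Vᵀ := by
    have hN' : N = (A - L * (Lᵀ * A)) * Vᵀ := by
      have hLB : L * (Lᵀ * (L * B)) = L * B := by rw [← Matrix.mul_assoc Lᵀ, hL, Matrix.one_mul]
      rw [hN, hΔ, Matrix.mul_sub, Matrix.mul_sub, hLB, Matrix.sub_mul]
      simp only [Matrix.mul_assoc]
      abel
    rw [hN', Matrix.mul_assoc _ Vᵀ V, hV, Matrix.mul_one]
  have hμp : 0 ≤ μ * r / p := by positivity
  have hcol : (L * (Lᵀ * Δ)) i j ^ 2 ≤ μ * r / p * frobNorm Δ ^ 2 := by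
    refine (proj_apply_sq_le hL (Δ.col j) i).trans
      (mul_le_mul (hLμ.sum_sq_le hμ i) ?_ (dotProduct_self_nonneg_real _) hμp)
    rw [← frobNorm_transpose]
    exact row_dotProduct_le_frobNorm_sq Δᵀ j
  have hrow : N i j ^ 2 ≤ μ * r / p * frobNorm Δ ^ 2 := by
    have hentry : N i j = (V *ᵥ (Vᵀ *ᵥ N i)) j := by
      conv_lhs => rw [hNV]
      rw [mulVec_transpose, ← vecMul_transpose]
      rfl
    rw [hentry]
    exact (proj_apply_sq_le hV (N i) j).trans
      (mul_le_mul (hVμ.sum_sq_le hμ j)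
        ((row_dotProduct_le_frobNorm_sq N i).trans (frobNorm_sq_sub_proj_le hL Δ))
        (dotProduct_self_nonneg_real _) hμp)
  have hsplit : Δ i j = (L * (Lᵀ * Δ)) i j + N i j := by rw [hN, Matrix.sub_apply]; ring
  rw [hsplit]
  nlinarith [sq_nonneg ((L * (Lᵀ * Δ)) i j - N i j)]

theorem maxNorm_sq_le {m n : Type*} [Fintype m] [Fintype n] {M : Matrix m n ℝ} {K : ℝ}
    (hK : 0 ≤ K) (h : ∀ i j, M i j ^ 2 ≤ K) : maxNorm M ^ 2 ≤ K := by
  have hle : maxNorm M ≤ √K :=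
    Real.iSup_le (fun i => Real.iSup_le (fun j => Real.abs_le_sqrt (h i j)) K.sqrt_nonneg)
      K.sqrt_nonneg
  have hnonneg : 0 ≤ maxNorm M :=
    Real.iSup_nonneg fun i => Real.iSup_nonneg fun j => abs_nonneg _
  exact (Real.le_sqrt hnonneg hK).1 hle

/-- the key separation lemma — the difference of two incoherent
low-rank matrices must spread its energy: ‖Δ‖_max² ≤ (c̃ μ r⁴ / p) ‖Δ‖_F². -/
theorem stmt3 :
    ∃ c : ℝ, 0 < c ∧
      ∀ (p r : ℕ), 0 < r → r ≤ p →
        ∀ (μ : ℝ), 0 < μ →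
          ∀ (U V L R : Matrix (Fin p) (Fin r) ℝ) (σ lam : Fin r → ℝ),
            Uᵀ * U = 1 → Vᵀ * V = 1 → Lᵀ * L = 1 → Rᵀ * R = 1 →
            Incoherent μ U → Incoherent μ V → Incoherent μ L → Incoherent μ R →
            Antitone σ → (∀ i, 0 ≤ σ i) → Antitone lam → (∀ i, 0 ≤ lam i) →
            ∀ Δ : Matrix (Fin p) (Fin p) ℝ,
              Δ = U * Matrix.diagonal σ * Vᵀ - L * Matrix.diagonal lam * Rᵀ →
              maxNorm Δ ^ 2 ≤ (c * μ * (r : ℝ) ^ 4 / p) * frobNorm Δ ^ 2 ∧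
                (Δ ≠ 0 → maxNorm Δ ^ 2 / frobNorm Δ ^ 2 ≤ c * μ * (r : ℝ) ^ 4 / p) := by
  refine ⟨4, by norm_num, ?_⟩
  intro p r hr _ μ hμ U V L R σ lam _ hV hL _ _ hVμ hLμ _ _ _ _ _ Δ hΔ
  have hr4 : (r : ℝ) ≤ (r : ℝ) ^ 4 := le_self_pow₀ (by exact_mod_cast hr) (by norm_num)
  have hconst : 4 * (μ * r / p) ≤ 4 * μ * (r : ℝ) ^ 4 / p := by
    rw [← mul_div_assoc, ← mul_assoc]
    gcongr
  have hmain : maxNorm Δ ^ 2 ≤ (4 * μ * (r : ℝ) ^ 4 / p) * frobNorm Δ ^ 2 := by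
    refine maxNorm_sq_le (by positivity) fun i j => ?_
    refine le_trans ?_ (mul_le_mul_of_nonneg_right hconst (sq_nonneg _))
    rw [hΔ, Matrix.mul_assoc L]
    exact entry_sq_le_of_incoherent hμ.le hV hL hVμ hLμ _ _ i j
  exact ⟨hmain, fun _ => div_le_of_le_mul₀ (sq_nonneg _) (by positivity) hmain⟩
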